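/- Let f ∈ A₁(c). Then there exist a real number a ≥ 0 and a positive Borel measure ν on ℝ supported in ℝ ∖ (−1,1) with ∫ dν(t)/(1+t²) < ∞, such that for every z ∈ ℂ₁: f(z) − c₃ = a·(z − c₁) + ∫ (1/(t−z) − 1/(t−c₁)) dν(t). -/

import Mathlib

open Set Complex

noncomputable section

/-- The doubly-slit plane `ℂ(J)` for `J ⊆ ℝ`. -/
def CSlit (J : Set ℝ) : Set ℂ := {z : ℂ | z.im ≠ 0 ∨ z.re ∈ J}

/-- `ℂ₁ = ℂ((−1,1))`. -/
def C1 : Set ℂ := CSlit (Set.Ioo (-1 : ℝ) 1)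

/-- The class `A₁(c)` of normalized Herglotz functions. -/
structure MemA1 (c₁ c₂ c₃ c₄ : ℝ) (f : ℂ → ℂ) : Prop where
  holo : DifferentiableOn ℂ f C1
  maps : Set.MapsTo f C1 C1
  symm : ∀ z ∈ C1, f (starRingEnd ℂ z) = starRingEnd ℂ (f z)
  upper : ∀ z ∈ C1, 0 < z.im → 0 ≤ (f z).im
  lower : ∀ z ∈ C1, z.im < 0 → (f z).im ≤ 0
  val1 : f (c₁ : ℂ) = (c₃ : ℂ)
  val2 : f (c₂ : ℂ) = (c₄ : ℂ)

open MeasureTheory Filter Topology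

lemma cauchy_rep (F : ℂ → ℂ) (hF : DiffContOnCl ℂ F (Metric.ball 0 1))
    (hs : ∀ e : ℂ, ‖e‖ = 1 → F (starRingEnd ℂ e) = starRingEnd ℂ (F e)) (ζ : ℂ) (hζ : ‖ζ‖ < 1) :
    F ζ - F 0 = ∫ θ in (0:ℝ)..(2 * Real.pi),
      ((Real.sin θ * (F (exp (θ * I))).im / Real.pi : ℝ) : ℂ) *
        (ζ / (1 - 2 * (Real.cos θ : ℂ) * ζ + ζ ^ 2)) := by
  have hne : ∀ e : ℂ, ‖e‖ ≤ 1 → 1 - ζ * e ≠ 0 := by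
    intro e he h
    have : ζ * e = 1 := by linear_combination -h
    have h2 : ‖ζ‖ * ‖e‖ = 1 := by rw [← norm_mul, this]; simp
    nlinarith [norm_nonneg ζ, norm_nonneg e]
  have hne2 : ∀ e : ℂ, ‖e‖ = 1 → e - ζ ≠ 0 := by
    intro e he h
    have : e = ζ := by linear_combination h
    rw [this] at he; linarith
  set H : ℂ → ℂ := fun e => (1 - e ^ 2) * F e / (1 - ζ * e) with hH
  have hHd : DiffContOnCl ℂ H (Metric.ball 0 1) := by
    constructor
    · intro e he
      have h1 := hF.1 e he
      have h2 := hne e (by simpa using (le_of_lt (by simpa using he : ‖e‖ < 1)))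
      apply DifferentiableWithinAt.div
      · exact DifferentiableWithinAt.mul (by fun_prop) h1
      · fun_prop
      · exact h2
    · have hc := hF.2
      rw [closure_ball (0:ℂ) one_ne_zero] at hc ⊢
      apply ContinuousOn.div
      · exact ContinuousOn.mul (by fun_prop) hc
      · fun_prop
      · intro e he; exact hne e (by simpa using he)
  have hFc : Continuous fun θ : ℝ => F (exp (θ * I)) := by
    have hc := hF.2
    rw [closure_ball (0:ℂ) one_ne_zero] at hc
    apply hc.comp_continuous (by fun_prop)
    intro θ; simp
  have c1 := hHd.circleIntegral_sub_inv_smul (w := ζ) (by simpa using hζ)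
  have c0 := hHd.circleIntegral_sub_inv_smul (w := 0) (by simp)
  simp only [circleIntegral, deriv_circleMap, circleMap, smul_eq_mul, zero_add, ofReal_one, one_mul,
    sub_zero] at c1 c0
  have hnorm : ∀ θ : ℝ, ‖exp (θ * I)‖ = 1 := fun θ => by simp
  have hHc : Continuous fun θ : ℝ => H (exp (θ * I)) := by
    apply Continuous.div
    · exact Continuous.mul (by fun_prop) hFc
    · fun_prop
    · intro θ; exact hne _ (hnorm θ).le
  have H0 : H 0 = F 0 := by simp [hH]
  have Hz : H ζ = F ζ := by
    have : 1 - ζ * ζ ≠ 0 := hne ζ hζ.le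
    have h' : 1 - ζ ^ 2 ≠ 0 := by rwa [pow_two]
    simp only [hH, ← pow_two]
    rw [mul_div_assoc, mul_comm, div_mul_cancel₀ _ h']
  set K : ℝ → ℂ := fun θ => ζ / (1 - 2 * (Real.cos θ : ℂ) * ζ + ζ ^ 2) with hK
  have hfac : ∀ θ : ℝ, (1 - 2 * (Real.cos θ : ℂ) * ζ + ζ ^ 2) * exp (θ * I)
      = (exp (θ * I) - ζ) * (1 - ζ * exp (θ * I)) := by
    intro θ
    have hee : exp (θ * I) * exp (-θ * I) = 1 := by rw [← exp_add]; simp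
    rw [ofReal_cos, Complex.cos]
    linear_combination (-ζ) * hee
  have hden : ∀ θ : ℝ, 1 - 2 * (Real.cos θ : ℂ) * ζ + ζ ^ 2 ≠ 0 := by
    intro θ h
    have := hfac θ
    rw [h, zero_mul] at this
    exact mul_ne_zero (hne2 _ (hnorm θ)) (hne _ (hnorm θ).le) this.symm
  have hKc : Continuous K := by
    apply Continuous.div
    · fun_prop
    · fun_prop
    · exact hden
  set q : ℝ → ℂ := fun θ => (Real.sin θ : ℂ) * F (exp (θ * I)) / (2 * Real.pi * I) * K θ with hq
  have hqc : Continuous q := by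
    apply Continuous.mul _ hKc
    apply Continuous.div_const
    exact Continuous.mul (by fun_prop) hFc
  have hpi : (Real.pi : ℂ) ≠ 0 := by exact_mod_cast Real.pi_ne_zero
  have e1 : F ζ - F 0 = 2 * ∫ θ in (0:ℝ)..(2 * Real.pi), q θ := by
    have : (2 * Real.pi * I) * (F ζ - F 0) = (2 * Real.pi * I) * (2 * ∫ θ in (0:ℝ)..(2 * Real.pi), q θ) := by
      rw [mul_sub, ← Hz, ← H0, ← c1, ← c0, ← intervalIntegral.integral_sub,
        ← intervalIntegral.integral_const_mul, ← intervalIntegral.integral_const_mul]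
      · apply intervalIntegral.integral_congr
        intro θ _
        have a1 := hne2 _ (hnorm θ)
        have a2 := hne _ (hnorm θ).le
        have a3 : exp (θ * I) ≠ 0 := exp_ne_zero _
        have a4 := hden θ
        have a5 : K θ = ζ * exp (θ * I) / ((exp (θ * I) - ζ) * (1 - ζ * exp (θ * I))) := by
          rw [← hfac θ]; simp only [hK]; field_simp
        have hee : exp (θ * I) * exp (-θ * I) = 1 := by rw [← exp_add]; simp
        have a6 : (Real.sin θ : ℂ) * exp (θ * I) * 2 = (1 - exp (θ * I) ^ 2) * I := by
          rw [ofReal_sin, Complex.sin]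
          linear_combination I * hee
        simp only [hq, a5, hH]
        field_simp
        linear_combination (-ζ * F (exp (θ * I)) * (1 - ζ * exp (θ * I))⁻¹) * a6
      · apply Continuous.intervalIntegrable
        refine Continuous.mul (by fun_prop) (Continuous.mul (Continuous.inv₀ (by fun_prop) ?_) hHc)
        intro θ; exact hne2 _ (hnorm θ)
      · apply Continuous.intervalIntegrable
        refine Continuous.mul (by fun_prop) (Continuous.mul (Continuous.inv₀ (by fun_prop) ?_) hHc)
        intro θ; exact exp_ne_zero _
    exact mul_left_cancel₀ (by simp [hpi]) this
  have e2 : ∫ θ in (0:ℝ)..(2 * Real.pi), q (2 * Real.pi - θ) = ∫ θ in (0:ℝ)..(2 * Real.pi), q θ := by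
    rw [intervalIntegral.integral_comp_sub_left]; simp
  rw [e1, two_mul]
  nth_rewrite 2 [← e2]
  have hqc2 : Continuous fun θ : ℝ => q (2 * Real.pi - θ) := hqc.comp (by fun_prop)
  rw [← intervalIntegral.integral_add (hqc.intervalIntegrable _ _) (hqc2.intervalIntegrable _ _)]
  apply intervalIntegral.integral_congr
  intro θ _
  have b1 : exp (((2 * Real.pi - θ : ℝ) : ℂ) * I) = starRingEnd ℂ (exp (θ * I)) := by
    rw [← exp_conj]
    push_cast
    rw [sub_mul, Complex.exp_sub, exp_two_pi_mul_I]
    simp [Complex.exp_neg]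
  have b2 : K (2 * Real.pi - θ) = K θ := by simp only [hK, Real.cos_two_pi_sub]
  have b3 := hs _ (hnorm θ)
  have b4 : F (exp (θ * I)) - starRingEnd ℂ (F (exp (θ * I))) = 2 * I * ((F (exp (θ * I))).im : ℂ) := by
    rw [Complex.sub_conj]; push_cast; ring
  simp only [hq, b1, b2, b3, Real.sin_two_pi_sub]
  change _ = _ * K θ
  generalize K θ = k
  push_cast
  field_simp
  linear_combination (k * Complex.sin θ) * b4

def phi (ζ : ℂ) : ℂ := 2 * ζ / (1 + ζ ^ 2)

lemma one_add_sq_ne {ζ : ℂ} (h : ‖ζ‖ < 1) : 1 + ζ ^ 2 ≠ 0 := by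
  intro h0
  have : ζ ^ 2 = -1 := by linear_combination h0
  have h2 : ‖ζ‖ ^ 2 = 1 := by rw [← norm_pow, this]; simp
  nlinarith [norm_nonneg ζ]

lemma phi_im (ζ : ℂ) : (phi ζ).im = 2 * ζ.im * (1 - ‖ζ‖ ^ 2) / normSq (1 + ζ ^ 2) := by
  rw [← normSq_eq_norm_sq, phi, div_im]
  rw [← sub_div]
  congr 1
  simp [pow_two, normSq_apply]
  ring

lemma normSq_pos' {ζ : ℂ} (h : ‖ζ‖ < 1) : 0 < normSq (1 + ζ ^ 2) :=
  normSq_pos.2 (one_add_sq_ne h)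

lemma phi_im_nonneg {ζ : ℂ} (h : ‖ζ‖ < 1) (hi : 0 < ζ.im) : 0 < (phi ζ).im := by
  rw [phi_im]
  have := normSq_pos' h
  have : 0 < 1 - ‖ζ‖ ^ 2 := by nlinarith [norm_nonneg ζ]
  positivity

lemma phi_im_nonpos {ζ : ℂ} (h : ‖ζ‖ < 1) (hi : ζ.im < 0) : (phi ζ).im < 0 := by
  rw [phi_im]
  have := normSq_pos' h
  have : 0 < 1 - ‖ζ‖ ^ 2 := by nlinarith [norm_nonneg ζ]
  apply div_neg_of_neg_of_pos _ ‹_›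
  nlinarith

lemma phi_conj (ζ : ℂ) : phi (starRingEnd ℂ ζ) = starRingEnd ℂ (phi ζ) := by
  have : starRingEnd ℂ (2 : ℂ) = 2 := Complex.conj_ofNat 2
  simp [phi, this]

lemma phi_mem {ζ : ℂ} (h : ‖ζ‖ < 1) : phi ζ ∈ C1 := by
  rcases lt_trichotomy ζ.im 0 with hi | hi | hi
  · exact Or.inl (phi_im_nonpos h hi).ne
  · right
    obtain ⟨x, rfl⟩ : ∃ x : ℝ, (x : ℂ) = ζ := ⟨ζ.re, by apply Complex.ext <;> simp [hi]⟩
    have hx : |x| < 1 := by simpa using h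
    rw [abs_lt] at hx
    have : phi x = ((2 * x / (1 + x ^ 2) : ℝ) : ℂ) := by simp [phi]
    rw [this, ofReal_re]
    constructor
    · rw [lt_div_iff₀ (by positivity)]; nlinarith
    · rw [div_lt_iff₀ (by positivity)]; nlinarith
  · exact Or.inl (phi_im_nonneg h hi).ne'

lemma C1_den {z : ℂ} (hz : z ∈ C1) (t : ℝ) (ht : t ∈ Icc (-1 : ℝ) 1) : 1 - (t : ℂ) * z ≠ 0 := by
  intro h
  have hre := congrArg re h
  have him := congrArg im h
  simp at hre him
  have ht0 : t ≠ 0 := by rintro rfl; simp at hre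
  have him' : z.im = 0 := by tauto
  rcases hz with hz | hz
  · exact hz him'
  · obtain ⟨h1, h2⟩ := hz
    obtain ⟨h3, h4⟩ := ht
    have ht2 : t ^ 2 ≤ 1 := by nlinarith
    have hz2 : z.re ^ 2 < 1 := by nlinarith
    have hp : t ^ 2 * z.re ^ 2 = 1 := by rw [← mul_pow, show t * z.re = 1 by linarith]; norm_num
    nlinarith [sq_nonneg z.re]

lemma phi_surj {z : ℂ} (hz : z ∈ C1) : ∃ ζ : ℂ, ‖ζ‖ < 1 ∧ phi ζ = z := by
  by_cases h0 : z = 0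
  · exact ⟨0, by simp, by simp [phi, h0]⟩
  obtain ⟨s, hs⟩ : ∃ s : ℂ, s ^ 2 = 1 - z ^ 2 := IsAlgClosed.exists_pow_nat_eq _ (by norm_num)
  have key : ∀ ζ : ℂ, z * (1 + ζ ^ 2) = 2 * ζ → ζ ≠ 0 → ‖ζ‖ ≠ 1 := by
    intro ζ h hn h1
    have hc : ζ * starRingEnd ℂ ζ = 1 := by rw [mul_conj, normSq_eq_norm_sq, h1]; simp
    have hre : ζ + starRingEnd ℂ ζ = 2 * (ζ.re : ℂ) := by rw [add_conj]; push_cast; ring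
    apply C1_den hz ζ.re
    · have := abs_re_le_norm ζ
      rw [h1, abs_le] at this
      exact this
    · have : ζ * (2 * (1 - (ζ.re : ℂ) * z)) = 0 := by
        linear_combination (-1 : ℂ) * h + ζ * z * hre - z * hc
      simpa [hn] using this
  have e1 : ((1 + s) / z) * ((1 - s) / z) = 1 := by
    field_simp; linear_combination (-1 : ℂ) * hs
  have r1 : z * (1 + ((1 + s) / z) ^ 2) = 2 * ((1 + s) / z) := by
    field_simp; linear_combination hs
  have r2 : z * (1 + ((1 - s) / z) ^ 2) = 2 * ((1 - s) / z) := by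
    field_simp; linear_combination hs
  have n1 : (1 + s) / z ≠ 0 := left_ne_zero_of_mul_eq_one e1
  have n2 : (1 - s) / z ≠ 0 := right_ne_zero_of_mul_eq_one e1
  have fin : ∀ ζ : ℂ, z * (1 + ζ ^ 2) = 2 * ζ → ‖ζ‖ < 1 → ∃ ζ : ℂ, ‖ζ‖ < 1 ∧ phi ζ = z := by
    intro ζ h hl
    refine ⟨ζ, hl, ?_⟩
    rw [phi, div_eq_iff (one_add_sq_ne hl), h]
  have nn : ‖(1 + s) / z‖ * ‖(1 - s) / z‖ = 1 := by rw [← norm_mul, e1]; simp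
  rcases lt_or_gt_of_ne (key _ r1 n1) with h | h
  · exact fin _ r1 h
  · refine fin _ r2 ?_
    by_contra hcon
    push Not at hcon
    nlinarith

lemma phi_kernel {ζ : ℂ} (h : ‖ζ‖ < 1) (t : ℂ) :
    phi ζ / (1 - t * phi ζ) = 2 * (ζ / (1 - 2 * t * ζ + ζ ^ 2)) := by
  have h1 := one_add_sq_ne h
  have : 1 - t * phi ζ = (1 - 2 * t * ζ + ζ ^ 2) / (1 + ζ ^ 2) := by
    rw [phi]; field_simp; ring
  rw [this, phi, div_div_div_cancel_right₀ h1]; ring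

lemma C1_open : IsOpen C1 := by
  have : C1 = {z : ℂ | z.im ≠ 0} ∪ {z : ℂ | z.re ∈ Ioo (-1 : ℝ) 1} := by
    ext z; simp [C1, CSlit]
  rw [this]
  exact (isOpen_ne_fun continuous_im continuous_const).union (isOpen_Ioo.preimage continuous_re)

lemma phi_diff {ζ : ℂ} (h : ‖ζ‖ < 1) : DifferentiableAt ℂ phi ζ := by
  apply DifferentiableAt.div
  · fun_prop
  · fun_prop
  · exact one_add_sq_ne h

def cosI (θ : ℝ) : Icc (-1 : ℝ) 1 := ⟨Real.cos θ, Real.neg_one_le_cos θ, Real.cos_le_one θ⟩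

lemma cosI_cont : Continuous cosI := Real.continuous_cos.subtype_mk _

lemma kernel_cont {z : ℂ} (hz : z ∈ C1) :
    Continuous fun t : Icc (-1 : ℝ) 1 => z / (1 - ((t : ℝ) : ℂ) * z) := by
  apply Continuous.div
  · fun_prop
  · fun_prop
  · intro t; exact C1_den hz t t.2

lemma rep_r {c₁ c₂ c₃ c₄ : ℝ} {f : ℂ → ℂ} (hf : MemA1 c₁ c₂ c₃ c₄ f) (r : ℝ) (h0 : 0 < r)
    (h1 : r < 1) : ∃ σ : FiniteMeasure (Icc (-1 : ℝ) 1), ∀ ζ : ℂ, ‖ζ‖ < 1 →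
      f (phi (r * ζ)) - f 0 = ∫ t, phi ζ / (1 - ((t : ℝ) : ℂ) * phi ζ) ∂(σ : Measure (Icc (-1 : ℝ) 1)) := by
  have hlt : ∀ ζ : ℂ, ‖ζ‖ ≤ 1 → ‖(r : ℂ) * ζ‖ < 1 := by
    intro ζ h
    rw [norm_mul, Complex.norm_real, Real.norm_eq_abs, abs_of_pos h0]
    nlinarith [norm_nonneg ζ]
  set F : ℂ → ℂ := fun ζ => f (phi (r * ζ)) with hF
  have hFd : ∀ ζ : ℂ, ‖ζ‖ ≤ 1 → DifferentiableAt ℂ F ζ := by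
    intro ζ h
    have a1 : DifferentiableAt ℂ f (phi (r * ζ)) :=
      (hf.holo _ (phi_mem (hlt ζ h))).differentiableAt (C1_open.mem_nhds (phi_mem (hlt ζ h)))
    have a2 : DifferentiableAt ℂ phi (r * ζ) := phi_diff (hlt ζ h)
    have a3 : DifferentiableAt ℂ (fun ζ : ℂ => phi (r * ζ)) ζ :=
      DifferentiableAt.comp ζ a2 (by fun_prop)
    exact DifferentiableAt.comp ζ a1 a3
  have hFD : DiffContOnCl ℂ F (Metric.ball 0 1) := by
    constructor
    · intro ζ h
      exact (hFd ζ (by simpa using (show ‖ζ‖ < 1 by simpa using h).le)).differentiableWithinAt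
    · rw [closure_ball (0:ℂ) one_ne_zero]
      intro ζ h
      exact (hFd ζ (by simpa using h)).continuousAt.continuousWithinAt
  have hs : ∀ e : ℂ, ‖e‖ = 1 → F (starRingEnd ℂ e) = starRingEnd ℂ (F e) := by
    intro e he
    have : (r : ℂ) * starRingEnd ℂ e = starRingEnd ℂ (r * e) := by simp
    simp only [hF]
    rw [this, phi_conj, hf.symm _ (phi_mem (hlt e he.le))]
  have hnorm : ∀ θ : ℝ, ‖exp (θ * I)‖ = 1 := fun θ => by simp
  have hFc : Continuous fun θ : ℝ => F (exp (θ * I)) := by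
    rw [continuous_iff_continuousAt]
    intro θ
    exact ContinuousAt.comp (f := fun θ : ℝ => exp (θ * I)) (hFd _ (hnorm θ).le).continuousAt
      (by fun_prop)
  set d : ℝ → ℝ := fun θ => Real.sin θ * (F (exp (θ * I))).im / (2 * Real.pi) with hd
  have hdc : Continuous d := by
    apply Continuous.div_const
    exact Continuous.mul (by fun_prop) (continuous_im.comp hFc)
  have hd0 : ∀ θ, 0 ≤ d θ := by
    intro θ
    have him : ((r : ℂ) * exp (θ * I)).im = r * Real.sin θ := by
      simp [exp_ofReal_mul_I_im]
    have hm := phi_mem (hlt _ (hnorm θ).le)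
    apply div_nonneg _ (by positivity)
    rcases lt_trichotomy (Real.sin θ) 0 with h | h | h
    · apply mul_nonneg_of_nonpos_of_nonpos h.le
      apply hf.lower _ hm
      apply phi_im_nonpos (hlt _ (hnorm θ).le)
      rw [him]; nlinarith
    · simp [h]
    · apply mul_nonneg h.le
      apply hf.upper _ hm
      apply phi_im_nonneg (hlt _ (hnorm θ).le)
      rw [him]; positivity
  set μ0 : Measure ℝ := (volume : Measure ℝ).restrict (Ioc 0 (2 * Real.pi)) with hμ0
  set μ1 : Measure ℝ := μ0.withDensity (fun θ => ENNReal.ofReal (d θ)) with hμ1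
  have hdi : Integrable d μ0 :=
    (hdc.integrableOn_Icc (a := 0) (b := 2 * Real.pi)).mono_set Ioc_subset_Icc_self
  have : IsFiniteMeasure μ1 := isFiniteMeasure_withDensity_ofReal hdi.2
  have : IsFiniteMeasure (μ1.map cosI) := inferInstance
  refine ⟨⟨μ1.map cosI, inferInstance⟩, fun ζ hζ => ?_⟩
  have hc := cauchy_rep F hFD hs ζ hζ
  have hF0 : F 0 = f 0 := by simp [hF, phi]
  rw [hF0] at hc
  change F ζ - f 0 = _
  rw [hc, FiniteMeasure.toMeasure_mk, integral_map cosI_cont.measurable.aemeasurable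
    (kernel_cont (phi_mem hζ)).aestronglyMeasurable, hμ1,
    integral_withDensity_eq_integral_toReal_smul (by fun_prop) (by simp),
    intervalIntegral.integral_of_le (by positivity)]
  apply integral_congr_ae
  refine Eventually.of_forall fun θ => ?_
  simp only [ENNReal.toReal_ofReal (hd0 θ)]
  simp only [phi_kernel hζ, cosI, real_smul, hd]
  push_cast
  field_simp

lemma rep {c₁ c₂ c₃ c₄ : ℝ} {f : ℂ → ℂ} (hf : MemA1 c₁ c₂ c₃ c₄ f) :
    ∃ σ : FiniteMeasure (Icc (-1 : ℝ) 1), ∀ z ∈ C1,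
      f z - f 0 = ∫ t, z / (1 - ((t : ℝ) : ℂ) * z) ∂(σ : Measure (Icc (-1 : ℝ) 1)) := by
  set r : ℕ → ℝ := fun n => 1 - 1 / ((n : ℝ) + 2) with hr
  have hr0 : ∀ n, 0 < r n := by
    intro n
    have : 1 / ((n : ℝ) + 2) < 1 := by
      rw [div_lt_one (by positivity)]; linarith [(Nat.cast_nonneg n : (0:ℝ) ≤ n)]
    simp only [hr]; linarith
  have hr1 : ∀ n, r n < 1 := by
    intro n
    have : 0 < 1 / ((n : ℝ) + 2) := by positivity
    simp only [hr]; linarith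
  have hrt : Tendsto r atTop (𝓝 1) := by
    have : Tendsto (fun n : ℕ => 1 / ((n : ℝ) + 2)) atTop (𝓝 0) := by
      have := (tendsto_one_div_add_atTop_nhds_zero_nat (𝕜 := ℝ)).comp (tendsto_add_atTop_nat 1)
      refine this.congr fun n => ?_
      simp only [Function.comp]; push_cast; congr 1; ring
    have h2 := (tendsto_const_nhds (x := (1 : ℝ))).sub this
    rwa [sub_zero] at h2
  have hlim : ∀ ζ : ℂ, ‖ζ‖ < 1 →
      Tendsto (fun n => f (phi (r n * ζ)) - f 0) atTop (𝓝 (f (phi ζ) - f 0)) := by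
    intro ζ hζ
    apply Tendsto.sub _ tendsto_const_nhds
    have a1 : ContinuousAt f (phi ζ) :=
      ((hf.holo _ (phi_mem hζ)).differentiableAt (C1_open.mem_nhds (phi_mem hζ))).continuousAt
    have a2 : Tendsto (fun n => (r n : ℂ) * ζ) atTop (𝓝 ζ) := by
      have := ((continuous_ofReal.tendsto 1).comp hrt).mul_const ζ
      simpa using this
    exact a1.tendsto.comp ((phi_diff hζ).continuousAt.tendsto.comp a2)
  choose σ hσ using fun n => rep_r hf (r n) (hr0 n) (hr1 n)
  obtain ⟨B, hB⟩ := (hlim (1/2) (by norm_num)).norm.bddAbove_range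
  have hphi : phi (1/2) = ((4/5 : ℝ) : ℂ) := by simp [phi]; norm_num
  have hmass : ∀ n, ((σ n).mass : ℝ) ≤ 9 / 4 * B := by
    intro n
    have b1 : ‖f (phi (r n * (1/2))) - f 0‖ ≤ B := hB ⟨n, rfl⟩
    rw [hσ n (1/2) (by norm_num), hphi] at b1
    have b2 : ∀ t : Icc (-1 : ℝ) 1, (((4/5 : ℝ) : ℂ) / (1 - ((t : ℝ) : ℂ) * ((4/5 : ℝ) : ℂ)))
        = (((4/5) / (1 - (t : ℝ) * (4/5)) : ℝ) : ℂ) := by intro t; push_cast; rfl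
    simp only [b2] at b1
    rw [integral_complex_ofReal, Complex.norm_real] at b1
    have b3 : ∫ t : Icc (-1 : ℝ) 1, (4/9 : ℝ) ∂(σ n : Measure (Icc (-1 : ℝ) 1)) ≤
        ∫ t : Icc (-1 : ℝ) 1, ((4/5) / (1 - (t : ℝ) * (4/5)) : ℝ) ∂(σ n : Measure (Icc (-1 : ℝ) 1)) := by
      apply integral_mono (integrable_const _)
      · have hcont : Continuous fun t : Icc (-1 : ℝ) 1 => ((4/5) / (1 - (t : ℝ) * (4/5)) : ℝ) := by
          apply Continuous.div (by fun_prop) (by fun_prop)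
          intro t; have := t.2.2; intro h; linarith
        exact (BoundedContinuousFunction.mkOfCompact ⟨_, hcont⟩).integrable _
      · intro t
        have := t.2.1
        have := t.2.2
        simp only
        rw [div_le_div_iff₀ (by norm_num) (by linarith)]
        linarith
    have b4 := (le_abs_self _).trans b1
    have b5 := b3.trans b4
    simp only [integral_const, smul_eq_mul] at b5
    have b6 : (σ n : Measure (Icc (-1 : ℝ) 1)).real univ = (σ n).mass := rfl
    rw [b6] at b5
    linarith
  have hK := isCompact_setOfPred_finiteMeasure_le_of_compactSpace (Icc (-1 : ℝ) 1) (9 / 4 * B).toNNReal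
  have hmem : ∀ n, σ n ∈ {μ : FiniteMeasure (Icc (-1 : ℝ) 1) | μ.mass ≤ (9 / 4 * B).toNNReal} :=
    fun n => NNReal.le_toNNReal_of_coe_le (hmass n)
  obtain ⟨μ, -, hμ⟩ := isCompact_iff_ultrafilter_le_nhds'.1 hK ((hyperfilter ℕ).map σ)
    (Ultrafilter.mem_map.2 (Eventually.of_forall hmem))
  have hμ' : Tendsto σ (hyperfilter ℕ : Filter ℕ) (𝓝 μ) := hμ
  refine ⟨μ, fun z hz => ?_⟩
  obtain ⟨ζ, hζ, rfl⟩ := phi_surj hz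
  have l1 := (hlim ζ hζ).mono_left Nat.hyperfilter_le_atTop
  have l2 := (FiniteMeasure.tendsto_iff_forall_integral_rclike_tendsto ℂ).1 hμ'
    (BoundedContinuousFunction.mkOfCompact ⟨_, kernel_cont hz⟩)
  refine tendsto_nhds_unique l1 (l2.congr fun n => ?_)
  exact (hσ n ζ hζ).symm

theorem stmt8 (c₁ c₂ c₃ c₄ : ℝ)
    (h1 : -1 < c₁) (h12 : c₁ < c₂) (h2 : c₂ < 1)
    (h3 : -1 < c₃) (h34 : c₃ < c₄) (h4 : c₄ < 1)
    (f : ℂ → ℂ) (hf : MemA1 c₁ c₂ c₃ c₄ f) :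
    ∃ (a : ℝ) (ν : MeasureTheory.Measure ℝ),
      0 ≤ a ∧
      ν (Set.Ioo (-1 : ℝ) 1) = 0 ∧
      MeasureTheory.Integrable (fun t : ℝ => 1 / (1 + t ^ 2)) ν ∧
      ∀ z ∈ C1,
        MeasureTheory.Integrable
          (fun t : ℝ => 1 / ((t : ℂ) - z) - 1 / ((t : ℂ) - (c₁ : ℂ))) ν ∧
        f z - (c₃ : ℂ) = (a : ℂ) * (z - (c₁ : ℂ)) +
          ∫ t : ℝ, (1 / ((t : ℂ) - z) - 1 / ((t : ℂ) - (c₁ : ℂ))) ∂ν := by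
  have hc1 : (c₁ : ℂ) ∈ C1 := Or.inr (by simp; constructor <;> linarith)
  obtain ⟨σ0, hσ⟩ := rep hf
  set σ : Measure (Icc (-1 : ℝ) 1) := (σ0 : Measure (Icc (-1 : ℝ) 1)) with hσd
  set S : Set (Icc (-1 : ℝ) 1) := {t | (t : ℝ) ≠ 0} with hS
  have hSm : MeasurableSet S := (measurableSet_singleton (0 : ℝ)).compl.preimage measurable_subtype_coe
  have hSc : Sᶜ = {⟨0, by simp⟩} := by
    ext t; simp [hS, Subtype.ext_iff]
  set τ : Measure (Icc (-1 : ℝ) 1) :=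
    (σ.restrict S).withDensity (fun t => ENNReal.ofReal (((t : ℝ)⁻¹) ^ 2)) with hτ
  have hdm : Measurable fun t : Icc (-1 : ℝ) 1 => ENNReal.ofReal (((t : ℝ)⁻¹) ^ 2) := by fun_prop
  have him : Measurable fun t : Icc (-1 : ℝ) 1 => ((t : ℝ)⁻¹) := by fun_prop
  have intg : ∀ {E : Type} [NormedAddCommGroup E] [NormedSpace ℝ E] [SecondCountableTopology E]
      [MeasurableSpace E] [BorelSpace E] (h : ℝ → E)
      (_ : StronglyMeasurable h) (k : Icc (-1 : ℝ) 1 → E) (_ : Continuous k)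
      (_ : ∀ t ∈ S, k t = ((t : ℝ)⁻¹) ^ 2 • h ((t : ℝ)⁻¹)),
      Integrable h (τ.map fun t : Icc (-1 : ℝ) 1 => ((t : ℝ)⁻¹)) ∧
        ∫ s, h s ∂(τ.map fun t : Icc (-1 : ℝ) 1 => ((t : ℝ)⁻¹)) = ∫ t in S, k t ∂σ := by
    intro E _ _ _ _ _ h hh k hk hkh
    have hki : Integrable k σ := (BoundedContinuousFunction.mkOfCompact ⟨_, hk⟩).integrable _
    constructor
    · rw [integrable_map_measure hh.aestronglyMeasurable him.aemeasurable, hτ,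
        integrable_withDensity_iff_integrable_smul' hdm (by simp)]
      refine (hki.restrict (s := S)).congr ?_
      filter_upwards [ae_restrict_mem hSm] with t ht
      rw [hkh t ht, ENNReal.toReal_ofReal (by positivity)]; rfl
    · rw [integral_map him.aemeasurable hh.aestronglyMeasurable, hτ,
        integral_withDensity_eq_integral_toReal_smul hdm (by simp)]
      refine setIntegral_congr_fun hSm fun t ht => ?_
      rw [hkh t ht, ENNReal.toReal_ofReal (by positivity)]
  refine ⟨σ.real Sᶜ, τ.map fun t : Icc (-1 : ℝ) 1 => ((t : ℝ)⁻¹), measureReal_nonneg, ?_, ?_, ?_⟩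
  · rw [Measure.map_apply him measurableSet_Ioo]
    apply withDensity_absolutelyContinuous
    rw [Measure.restrict_apply (him measurableSet_Ioo)]
    convert measure_empty (μ := σ)
    ext t
    simp only [mem_inter_iff, mem_preimage, mem_empty_iff_false, iff_false, not_and, hS, mem_ofPred_eq]
    rintro ⟨a1, a2⟩ h0
    have b1 := t.2.1
    have b2 := t.2.2
    have e : (t : ℝ) * (t : ℝ)⁻¹ = 1 := mul_inv_cancel₀ h0
    have ht2 : (t : ℝ) ^ 2 ≤ 1 := by nlinarith
    have hz2 : ((t : ℝ)⁻¹) ^ 2 < 1 := by nlinarith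
    have hp : (t : ℝ) ^ 2 * ((t : ℝ)⁻¹) ^ 2 = 1 := by rw [← mul_pow, e]; norm_num
    nlinarith [sq_nonneg ((t : ℝ)⁻¹)]
  · refine (intg _ (Measurable.stronglyMeasurable (by fun_prop)) (fun t => 1 / (1 + (t : ℝ) ^ 2)) ?_ ?_).1
    · exact Continuous.div (by fun_prop) (by fun_prop) fun t => by positivity
    · intro t ht
      have ht' : (t : ℝ) ≠ 0 := ht
      simp only [smul_eq_mul]
      have : 1 + (t : ℝ) ^ 2 ≠ 0 := by positivity
      field_simp
      ring
  · intro z hz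
    set k : Icc (-1 : ℝ) 1 → ℂ := fun t => z / (1 - ((t : ℝ) : ℂ) * z) - c₁ / (1 - ((t : ℝ) : ℂ) * c₁) with hk
    have hkc : Continuous k := (kernel_cont hz).sub (kernel_cont hc1)
    have hki : Integrable k σ := (BoundedContinuousFunction.mkOfCompact ⟨_, hkc⟩).integrable _
    have main := intg (fun t : ℝ => 1 / ((t : ℂ) - z) - 1 / ((t : ℂ) - (c₁ : ℂ)))
      (Measurable.stronglyMeasurable (by fun_prop)) k hkc (by
        intro t ht
        have ht' : ((t : ℝ) : ℂ) ≠ 0 := by exact_mod_cast ht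
        have d1 := C1_den hz t t.2
        have d2 := C1_den hc1 t t.2
        have e1 : ∀ w : ℂ, 1 / ((((t : ℝ)⁻¹ : ℝ) : ℂ) - w) = (t : ℝ) / (1 - ((t : ℝ) : ℂ) * w) := by
          intro w
          have : (((t : ℝ)⁻¹ : ℝ) : ℂ) - w = (1 - ((t : ℝ) : ℂ) * w) / (t : ℝ) := by
            push_cast; field_simp
          rw [this, one_div_div]
        rw [e1, e1, real_smul]
        simp only [hk]
        rw [div_sub_div _ _ d1 d2, div_sub_div _ _ d1 d2, ← mul_div_assoc]
        congr 1
        push_cast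
        field_simp
        ring)
    refine ⟨main.1, ?_⟩
    rw [main.2]
    have i1 : Integrable (fun t : Icc (-1 : ℝ) 1 => z / (1 - ((t : ℝ) : ℂ) * z)) σ :=
      (BoundedContinuousFunction.mkOfCompact ⟨_, kernel_cont hz⟩).integrable _
    have i2 : Integrable (fun t : Icc (-1 : ℝ) 1 => (c₁ : ℂ) / (1 - ((t : ℝ) : ℂ) * c₁)) σ :=
      (BoundedContinuousFunction.mkOfCompact ⟨_, kernel_cont hc1⟩).integrable _
    have e1 : f z - c₃ = ∫ t, k t ∂σ := by
      rw [hk, integral_sub i1 i2, ← hσ z hz, ← hσ _ hc1, hf.val1]; ring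
    have e2 : ∫ t in Sᶜ, k t ∂σ = (σ.real Sᶜ : ℂ) * (z - c₁) := by
      have : ∫ t in Sᶜ, k t ∂σ = ∫ t in Sᶜ, (z - c₁) ∂σ := by
        refine setIntegral_congr_fun hSm.compl fun t ht => ?_
        have ht' : (t : ℝ) = 0 := by simpa [hS] using ht
        simp [hk, ht']
      rw [this, setIntegral_const, real_smul]
    rw [e1, ← e2, add_comm, integral_add_compl hSm hki]
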